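/- Let C be a nonzero cyclic group, let I_* be an infinite index set, set C_i = C for every i ∈ I_*, and let α_* < (2^{ℵ₀})⁺ be an ordinal. Then there exists a C̄-system A = (A_I : I ∈ 𝐈) with rnk(A) > α_*. -/

import Mathlib

universe u

namespace CSys

variable {ι : Type u} (C : ι → Type u) [∀ i, AddCommGroup (C i)]

/-- A `C̄`-system: a collection `idx` of subsets of the index set, directed under inclusion,
together with a subgroup `grp I ≤ ∏_{i ∈ I} C i` for each `I`, closed under the restriction
maps. -/
structure CSystem where
  idx : Set (Set ι)
  directed : ∀ I ∈ idx, ∀ J ∈ idx, ∃ K ∈ idx, I ⊆ K ∧ J ⊆ K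
  grp : (I : Set ι) → AddSubgroup ((i : I) → C (i : ι))
  restrict_mem : ∀ I ∈ idx, ∀ J ∈ idx, ∀ (h : I ⊆ J), ∀ a ∈ grp J,
    (fun i : I => a ⟨(i : ι), h i.2⟩) ∈ grp I

variable {C}

/-- `rankGE S α I a` says that the rank of `a ∈ A_I` in the inverse system `S` is `≥ α`:
for every `β < α` and every `J ⊇ I` in the system there is `b ∈ A_J` restricting to `a`
with rank `≥ β`. -/
def rankGE (S : CSystem C) : Ordinal.{u} → (I : Set ι) → ((i : I) → C (i : ι)) → Prop
  | α, I, a => ∀ β : Ordinal.{u}, β < α → ∀ J ∈ S.idx, ∀ (h : I ⊆ J),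
      ∃ b ∈ S.grp J, (fun i : I => b ⟨(i : ι), h i.2⟩) = a ∧ rankGE S β J b
  termination_by α => α

/-- `rnk(A)`: the least ordinal `α` such that every element of the system of rank `< ∞`
has rank `< α`. -/
noncomputable def sysRank (S : CSystem C) : Ordinal.{u} :=
  sInf {α : Ordinal.{u} | ∀ I ∈ S.idx, ∀ a ∈ S.grp I,
    (¬ ∀ β : Ordinal.{u}, rankGE S β I a) → ¬ rankGE S α I a}

end CSys

open CSys

/-!
Put on the `n`-th level of a tree the strictly decreasing sequences of length `n` in a well-order.
The group of finitely supported `C`-valued functions on a level embeds into a power of `C` by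
summation over the members of any family of sets that isolates points from finite sets. Such a
family of size `κ` exists on every set of size at most `2 ^ κ`, so `κ` coordinates per level
suffice. In the resulting system, a nonzero element of infinite rank would generate an infinite
decreasing sequence in the well-order. On the other hand, if the well-order is `α × ω`, then the
function supported at a single sequence has rank at least the ordinal in its last entry, because
decreasing the `ω`-component reaches any later level at the cost of a single step down in `α`.
-/

universe v

open Cardinal

namespace CSys

section Rank

variable {ι : Type u} {C : ι → Type u} [∀ i, AddCommGroup (C i)] {S : CSystem C}

theorem rankGE_iff {α : Ordinal.{u}} {I : Set ι} {a : (i : I) → C i} :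
    rankGE S α I a ↔ ∀ β < α, ∀ J ∈ S.idx, ∀ h : I ⊆ J,
      ∃ b ∈ S.grp J, (fun i : I => b ⟨i, h i.2⟩) = a ∧ rankGE S β J b := by
  rw [rankGE]

theorem rankGE.anti {α β : Ordinal.{u}} {I : Set ι} {a : (i : I) → C i}
    (ha : rankGE S α I a) (hβα : β ≤ α) : rankGE S β I a :=
  rankGE_iff.2 fun γ hγ => rankGE_iff.1 ha γ (hγ.trans_le hβα)

variable (S) in
theorem exists_rankGE_imp_forall_rankGE :
    ∃ α : Ordinal.{u}, ∀ I a, rankGE S α I a → ∀ β, rankGE S β I a := by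
  have bound (p : Σ I : Set ι, (i : I) → C i) :
      ∃ α : Ordinal.{u}, rankGE S α p.1 p.2 → ∀ β, rankGE S β p.1 p.2 := by
    by_cases hp : ∀ β, rankGE S β p.1 p.2
    · exact ⟨0, fun _ => hp⟩
    · obtain ⟨α, hα⟩ := not_forall.1 hp
      exact ⟨α, fun h => absurd h hα⟩
  choose f hf using bound
  exact ⟨⨆ p, f p, fun I a ha => hf ⟨I, a⟩ (ha.anti (Ordinal.le_iSup f ⟨I, a⟩))⟩

theorem exists_extension_forall_rankGE {I J : Set ι} {a : (i : I) → C i}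
    (ha : ∀ β, rankGE S β I a) (hJ : J ∈ S.idx) (hIJ : I ⊆ J) :
    ∃ b ∈ S.grp J, (fun i : I => b ⟨i, hIJ i.2⟩) = a ∧ ∀ β, rankGE S β J b := by
  obtain ⟨α, hα⟩ := exists_rankGE_imp_forall_rankGE S
  obtain ⟨b, hb, hba, hbα⟩ := rankGE_iff.1 (ha (Order.succ α)) α (Order.lt_succ α) J hJ hIJ
  exact ⟨b, hb, hba, hα J b hbα⟩

theorem lt_sysRank {α : Ordinal.{u}} {I : Set ι} {a : (i : I) → C i} (hI : I ∈ S.idx)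
    (ha : a ∈ S.grp I) (hα : rankGE S α I a) (htop : ¬ ∀ β, rankGE S β I a) :
    α < sysRank S := by
  obtain ⟨γ, hγ⟩ := exists_rankGE_imp_forall_rankGE S
  have attained := csInf_mem (s := {α : Ordinal.{u} | ∀ I ∈ S.idx, ∀ a ∈ S.grp I,
    (¬ ∀ β, rankGE S β I a) → ¬ rankGE S α I a}) ⟨γ, fun I _ a _ hn h => hn (hγ I a h)⟩
  exact lt_of_not_ge fun hle => attained I hI a ha htop (hα.anti hle)

end Rank

section Isolating

variable {X Q : Type*}

/-- A family `U` of subsets of `X` is isolating if every point has, for every finite set not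
containing it, a member of the family that contains the point and is disjoint from the finite
set. -/
def IsIsolating (U : Q → Set X) : Prop :=
  ∀ x, ∀ F : Finset X, x ∉ F → ∃ q, x ∈ U q ∧ ∀ y ∈ F, y ∉ U q

theorem IsIsolating.preimage {Y : Type*} {U : Q → Set Y} (hU : IsIsolating U) {f : X → Y}
    (hf : Function.Injective f) : IsIsolating fun q => f ⁻¹' U q := by
  intro x F hx
  obtain ⟨q, hxq, hq⟩ := hU (f x) (F.map ⟨f, hf⟩) (by simpa using hx)
  exact ⟨q, hxq, fun y hy => hq (f y) (Finset.mem_map_of_mem ⟨f, hf⟩ hy)⟩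

theorem IsIsolating.comp_surjective {P : Type*} {U : Q → Set X} (hU : IsIsolating U) {f : P → Q}
    (hf : Function.Surjective f) : IsIsolating (U ∘ f) := by
  intro x F hx
  obtain ⟨q, hq⟩ := hU x F hx
  obtain ⟨p, rfl⟩ := hf q
  exact ⟨p, hq⟩

theorem isIsolating_inter_eq (D : Type*) :
    IsIsolating fun q : Finset D × Finset D => {s : Set D | s ∩ q.1 = q.2} := by
  classical
  intro s F hs
  have separating (t : F) : ∃ d, ¬ (d ∈ t.1 ↔ d ∈ s) := by
    by_contra! h
    exact ne_of_mem_of_not_mem t.2 hs (Set.ext h)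
  choose d hd using separating
  let E := Finset.univ.image d
  refine ⟨(E, {e ∈ E | e ∈ s}), by ext; simp [and_comm], fun t ht htq => hd ⟨t, ht⟩ ?_⟩
  have hdE : d ⟨t, ht⟩ ∈ E := Finset.mem_image_of_mem d (Finset.mem_univ _)
  simpa [hdE] using Set.ext_iff.1 htq (d ⟨t, ht⟩)

end Isolating

theorem exists_isIsolating (X : Type v) (Q : Type u) [Infinite Q]
    (hX : Cardinal.lift.{u} #X ≤ Cardinal.lift.{v} (2 ^ #Q)) :
    ∃ U : Q → Set X, IsIsolating U := by
  rw [← Cardinal.mk_set, Cardinal.lift_mk_le'] at hX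
  obtain ⟨e⟩ := hX
  have hcard : #Q = #(Finset Q × Finset Q) := by
    simp [Cardinal.mul_eq_self (Cardinal.aleph0_le_mk Q)]
  obtain ⟨f⟩ := Cardinal.eq.1 hcard
  exact ⟨_, ((isIsolating_inter_eq Q).preimage e.injective).comp_surjective f.surjective⟩

section SumOn

variable {X Y : Type*} {C : Type*} [AddCommMonoid C]

/-- The sum over `U` of the coefficients of a formal combination of points of `X`. -/
noncomputable def sumOn (U : Set X) : (X →₀ C) →+ C :=
  Finsupp.liftAddHom (U.indicator fun _ => AddMonoidHom.id C)

theorem sumOn_single (U : Set X) (x : X) (c : C) :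
    sumOn U (Finsupp.single x c) = U.indicator (fun _ => c) x := by
  by_cases hx : x ∈ U <;> simp [sumOn, hx]

theorem sumOn_apply (U : Set X) (g : X →₀ C) :
    sumOn U g = ∑ x ∈ g.support, U.indicator g x := by
  rw [sumOn, Finsupp.liftAddHom_apply, Finsupp.sum]
  refine Finset.sum_congr rfl fun x _ => ?_
  by_cases hx : x ∈ U <;> simp [hx]

theorem sumOn_mapDomain (U : Set Y) (f : X → Y) (g : X →₀ C) :
    sumOn U (g.mapDomain f) = sumOn (f ⁻¹' U) g := by
  induction g using Finsupp.induction_linear with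
  | zero => simp
  | add g h hg hh => rw [Finsupp.mapDomain_add, map_add, map_add, hg, hh]
  | single x c => rw [Finsupp.mapDomain_single, sumOn_single, sumOn_single]; rfl

theorem exists_ne_zero_of_mapDomain_ne_zero {f : X → Y} {g : X →₀ C} {y : Y}
    (hy : g.mapDomain f y ≠ 0) : ∃ x, f x = y ∧ g x ≠ 0 := by
  classical
  obtain ⟨x, hx, hxy⟩ :=
    Finset.mem_image.1 (Finsupp.mapDomain_support (Finsupp.mem_support_iff.2 hy))
  exact ⟨x, hxy, Finsupp.mem_support_iff.1 hx⟩

end SumOn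

theorem IsIsolating.eq_of_sumOn_eq {X Q C : Type*} [AddCommGroup C] {U : Q → Set X}
    (hU : IsIsolating U) {g h : X →₀ C} (hgh : ∀ q, sumOn (U q) g = sumOn (U q) h) : g = h := by
  classical
  by_contra hne
  obtain ⟨x, hx⟩ := Finsupp.support_nonempty_iff.2 (sub_ne_zero.2 hne)
  obtain ⟨q, hxq, hq⟩ := hU x ((g - h).support.erase x) (Finset.notMem_erase _ _)
  have hsum : sumOn (U q) (g - h) = (g - h) x := by
    rw [sumOn_apply, Finset.sum_eq_single_of_mem x hx, Set.indicator_of_mem hxq]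
    exact fun y hy hyx => Set.indicator_of_notMem (hq y (Finset.mem_erase.2 ⟨hyx, hy⟩)) _
  rw [map_sub, hgh q, sub_self] at hsum
  exact Finsupp.mem_support_iff.1 hx hsum.symm

section SumSystem

variable {ι : Type u} {X : Type*}

/-- The tuple, indexed by `I`, of the sums of coefficients over the sets `V i`. -/
noncomputable def sums {C : Type*} [AddCommMonoid C] (V : ι → Set X) (I : Set ι) :
    (X →₀ C) →+ (I → C) :=
  AddMonoidHom.pi fun i => sumOn (V i)

theorem sums_apply {C : Type*} [AddCommMonoid C] (V : ι → Set X) (I : Set ι) (g : X →₀ C)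
    (i : I) : sums V I g i = sumOn (V i) g := rfl

/-- The system whose group at `I` consists of the tuples `sums V I g`, for `g` a formal
combination of points of `T I`. It is closed under restriction because `T` is antitone. -/
noncomputable def sumSystem (C : Type u) [AddCommGroup C] (V : ι → Set X) {𝓘 : Set (Set ι)}
    (h𝓘 : DirectedOn (· ⊆ ·) 𝓘) {T : Set ι → Set X} (hT : Antitone T) :
    CSystem (fun _ : ι => C) where
  idx := 𝓘
  directed := h𝓘
  grp I := (Finsupp.supported C ℤ (T I)).toAddSubgroup.map (sums V I)
  restrict_mem := by
    rintro I - J - hIJ _ ⟨g, hg, rfl⟩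
    exact ⟨g, Finsupp.supported_mono (R := ℤ) (hT hIJ) hg, rfl⟩

end SumSystem

section DecreasingList

variable {W : Type*} [Preorder W]

/-- The last entry of a list, where the empty list has the value `⊤` so that prolonging a decreasing
list always lowers its tip. -/
def tip (l : List W) : WithTop W := l.getLast?

theorem tip_lt_tip_dropLast {l : List W} (hl : l.IsChain (· > ·)) (hne : l ≠ []) :
    tip l < tip l.dropLast := by
  obtain ⟨s, w, rfl⟩ := (List.eq_nil_or_concat' l).resolve_left hne
  have htip : tip (s ++ [w]) = (w : WithTop W) := List.getLast?_concat
  rw [htip, List.dropLast_concat]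
  rcases hs : s.getLast? with _ | v
  · rw [tip, hs]
    exact WithTop.coe_lt_top w
  · rw [tip, hs]
    exact WithTop.coe_lt_coe.2 ((List.isChain_append.1 hl).2.2 v hs w rfl)

theorem exists_decreasing_prolongation {B : Type*} [Preorder B] {l : List (B ×ₗ ℕ)}
    (hl : l.IsChain (· > ·)) {b : B} (hb : ∀ p ∈ l.getLast?, b < (ofLex p).1) {m : ℕ}
    (hm : l.length ≤ m) :
    ∃ l' : List (B ×ₗ ℕ), l <+: l' ∧ l'.IsChain (· > ·) ∧ l'.length = m ∧
      ∀ p ∈ l'.getLast?, b ≤ (ofLex p).1 := by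
  let d : List (B ×ₗ ℕ) := (List.range (m - l.length)).reverse.map fun j => toLex (b, j)
  have hd_fst : ∀ p ∈ d, (ofLex p).1 = b := by simp [d]
  have hd_chain : d.IsChain (· > ·) := by
    rw [List.isChain_map, List.isChain_reverse]
    exact (List.pairwise_lt_range.imp fun hij => Prod.Lex.right b hij).isChain
  refine ⟨l ++ d, List.prefix_append l d, List.isChain_append.2 ⟨hl, hd_chain, ?_⟩, ?_, ?_⟩
  · intro p hp q hq
    refine Prod.Lex.lt_iff.2 (Or.inl ?_)
    exact (hd_fst q (List.mem_of_mem_head? hq)).trans_lt (hb p hp)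
  · simp only [d, List.length_append, List.length_map, List.length_reverse, List.length_range]
    omega
  · intro p hp
    rw [List.getLast?_append, Option.mem_def, Option.or_eq_some_iff] at hp
    rcases hp with hpd | ⟨-, hpl⟩
    · exact (hd_fst p (List.mem_of_mem_getLast? hpd)).ge
    · exact (hb p hpl).le

end DecreasingList

section TreeSystem

variable {ι : Type u} {Q : Type*} {φ : ι → ℕ × Q}

/-- The coordinates of height at most `n`. The first component of `φ i` is the height of the
coordinate `i`, the second one selects a member of a family of sets of lists. -/
def stage (φ : ι → ℕ × Q) (n : ℕ) : Set ι := {i | (φ i).1 ≤ n}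

theorem stage_mono (φ : ι → ℕ × Q) : Monotone (stage φ) :=
  fun _ _ hmn _ hi => le_trans hi hmn

theorem exists_mem_stage_eq (hφ : Function.Surjective φ) (n : ℕ) (q : Q) :
    ∃ i ∈ stage φ n, φ i = (n, q) := by
  obtain ⟨i, hi⟩ := hφ (n, q)
  exact ⟨i, (congrArg Prod.fst hi).le, hi⟩

theorem le_of_stage_subset_stage [Nonempty Q] (hφ : Function.Surjective φ) {m n : ℕ}
    (h : stage φ m ⊆ stage φ n) : m ≤ n := by
  obtain ⟨i, him, hi⟩ := exists_mem_stage_eq hφ m (Classical.arbitrary Q)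
  exact (congrArg Prod.fst hi).ge.trans (h him)

variable {W : Type*} {C : Type u} [AddCommGroup C] {U : Q → Set (List W)}

/-- The lists whose truncation to the height of the coordinate `i` lies in the set selected by
`i`. -/
def cylinder (φ : ι → ℕ × Q) (U : Q → Set (List W)) (i : ι) : Set (List W) :=
  {l | l.take (φ i).1 ∈ U (φ i).2}

/-- A formal combination of lists is not determined by its coordinates in a stage, because the lists
may be longer than the stage is high; only its truncation is. -/
theorem IsIsolating.mapDomain_take_eq (hU : IsIsolating U) (hφ : Function.Surjective φ) {n : ℕ}
    {g h : List W →₀ C} (hgh : ∀ i ∈ stage φ n,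
      sumOn (cylinder φ U i) g = sumOn (cylinder φ U i) h) :
    g.mapDomain (List.take n) = h.mapDomain (List.take n) := by
  refine hU.eq_of_sumOn_eq fun q => ?_
  obtain ⟨i, hin, hi⟩ := exists_mem_stage_eq hφ n q
  have hcyl : cylinder φ U i = List.take n ⁻¹' U q := by simp only [cylinder, hi]; rfl
  rw [sumOn_mapDomain, sumOn_mapDomain, ← hcyl]
  exact hgh i hin

variable [Preorder W]

variable (W) in
/-- The decreasing lists that are at least as long as every coordinate in `I` is high; these
carry the group at `I`. -/
def branches (φ : ι → ℕ × Q) (I : Set ι) : Set (List W) :=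
  {l | l.IsChain (· > ·) ∧ I ⊆ stage φ l.length}

theorem branches_anti (φ : ι → ℕ × Q) : Antitone (branches W φ) :=
  fun _ _ hIJ _ hl => ⟨hl.1, hIJ.trans hl.2⟩

variable (C) in
/-- The system of the tree of decreasing lists in `W`: its index sets are the stages, and its
coordinates are the sums of coefficients over the cylinders. -/
noncomputable def treeSystem (φ : ι → ℕ × Q) (U : Q → Set (List W)) :
    CSystem (fun _ : ι => C) :=
  sumSystem C (cylinder φ U) (directedOn_range.2 (stage_mono φ).directed_le)
    (branches_anti (W := W) φ)

theorem stage_mem_idx (n : ℕ) : stage φ n ∈ (treeSystem C φ U).idx := ⟨n, rfl⟩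

theorem sums_single_mem_grp {l : List W} (hl : l.IsChain (· > ·)) (c : C) :
    sums (cylinder φ U) (stage φ l.length) (Finsupp.single l c) ∈
      (treeSystem C φ U).grp (stage φ l.length) :=
  ⟨_, Finsupp.single_mem_supported (R := ℤ) c ⟨hl, subset_rfl⟩, rfl⟩

theorem IsIsolating.not_forall_rankGE_sums [WellFoundedLT W] (hU : IsIsolating U)
    (hφ : Function.Surjective φ) (s : List W) (g : List W →₀ C)
    (hs : g.mapDomain (List.take s.length) s ≠ 0) :
    ¬ ∀ β, rankGE (treeSystem C φ U) β (stage φ s.length)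
      (sums (cylinder φ U) (stage φ s.length) g) := by
  have : Nonempty Q := ⟨(hU [] ∅ (Finset.notMem_empty _)).choose⟩
  induction hw : tip s using WellFoundedLT.induction generalizing s g with
  | _ w ih =>
  subst hw
  intro htop
  obtain ⟨_, ⟨g', hg', rfl⟩, hrestrict, htop'⟩ := exists_extension_forall_rankGE htop
    (stage_mem_idx (s.length + 1)) (stage_mono φ s.length.le_succ)
  have hlevel : g'.mapDomain (List.take s.length) = g.mapDomain (List.take s.length) :=
    hU.mapDomain_take_eq hφ fun i hi => congrFun hrestrict ⟨i, hi⟩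
  have hfactor : List.take s.length = List.take s.length ∘ List.take (α := W) (s.length + 1) := by
    ext1 l
    simp [List.take_take]
  rw [← hlevel, hfactor, Finsupp.mapDomain_comp] at hs
  obtain ⟨s', hs's, hs'⟩ := exists_ne_zero_of_mapDomain_ne_zero hs
  obtain ⟨x, hxs', hgx⟩ := exists_ne_zero_of_mapDomain_ne_zero hs'
  have hx : x ∈ branches W φ (stage φ (s.length + 1)) := hg' (Finsupp.mem_support_iff.2 hgx)
  have hlen : s'.length = s.length + 1 := by
    rw [← hxs', List.length_take_of_le (le_of_stage_subset_stage hφ hx.2)]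
  have hchain : s'.IsChain (· > ·) := hxs' ▸ hx.1.take _
  have htip : tip s' < tip s := by
    rw [← hs's, ← Nat.add_sub_cancel (n := s.length) (m := 1), ← hlen, ← List.dropLast_eq_take]
    exact tip_lt_tip_dropLast hchain (List.ne_nil_of_length_eq_add_one hlen)
  rw [← hlen] at htop' hs'
  exact ih _ htip s' g' hs' rfl htop'

end TreeSystem

theorem rankGE_sums_single {ι : Type u} {Q : Type*} {C : Type u} [AddCommGroup C]
    {φ : ι → ℕ × Q} (hφ : Function.Surjective φ) [Nonempty Q] {α : Ordinal.{u}}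
    (U : Q → Set (List (Set.Iio α ×ₗ ℕ))) (c : C) {β : Ordinal.{u}} (hβα : β ≤ α)
    {l : List (Set.Iio α ×ₗ ℕ)} (hl : l.IsChain (· > ·))
    (hβl : ∀ p ∈ l.getLast?, β ≤ (ofLex p).1) :
    rankGE (treeSystem C φ U) β (stage φ l.length)
      (sums (cylinder φ U) (stage φ l.length) (Finsupp.single l c)) := by
  induction β using WellFoundedLT.induction generalizing l with
  | _ β ih =>
  refine rankGE_iff.2 ?_
  rintro γ hγ _ ⟨m, rfl⟩ hstage
  obtain ⟨l', hpre, hl', rfl, hγl'⟩ := exists_decreasing_prolongation hl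
    (b := ⟨γ, hγ.trans_le hβα⟩) (fun p hp => hγ.trans_le (hβl p hp))
    (le_of_stage_subset_stage hφ hstage)
  refine ⟨_, sums_single_mem_grp hl' c, ?_, ih γ hγ (hγ.le.trans hβα) hl' hγl'⟩
  funext i
  have htake : l'.take (φ i).1 = l.take (φ i).1 := by
    obtain ⟨d, rfl⟩ := hpre
    exact List.take_append_of_le_length i.2
  have hcyl : l' ∈ cylinder φ U i ↔ l ∈ cylinder φ U i := by
    simp only [cylinder, Set.mem_ofPred_eq, htake]
  rw [sums_apply, sums_apply, sumOn_single, sumOn_single]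
  exact Set.indicator_eq_indicator hcyl rfl

theorem mk_list_Iio_lex_nat_le {α : Ordinal.{u}} {κ : Cardinal.{u}} (hκ : ℵ₀ ≤ κ)
    (hα : α.card ≤ κ) : #(List (Set.Iio α ×ₗ ℕ)) ≤ Cardinal.lift.{u + 1} κ := by
  have hκ' : ℵ₀ ≤ Cardinal.lift.{u + 1} κ := Cardinal.aleph0_le_lift.2 hκ
  have hW : #(Set.Iio α ×ₗ ℕ) ≤ Cardinal.lift.{u + 1} κ := calc
    #(Set.Iio α ×ₗ ℕ) = #(Set.Iio α × ℕ) := Cardinal.mk_congr ofLex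
    _ = Cardinal.lift.{u + 1} α.card * ℵ₀ := by simp [Cardinal.mk_Iio_ordinal]
    _ ≤ Cardinal.lift.{u + 1} κ := Cardinal.mul_le_of_le hκ' (Cardinal.lift_le.2 hα) hκ'
  exact (Cardinal.mk_list_le_max _).trans (max_le hκ' hW)

theorem exists_surjective_nat_prod (ι : Type u) [Infinite ι] :
    ∃ φ : ι → ℕ × ι, Function.Surjective φ := by
  have hcard : #ι = #(ℕ × ι) := by simp
  obtain ⟨φ⟩ := Cardinal.eq.1 hcard
  exact ⟨φ, φ.surjective⟩

end CSys

theorem exists_cyclic_system_of_large_rank_general {ι : Type u} [Infinite ι]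
    (C : Type u) [AddCommGroup C] [Nontrivial C]
    (α : Ordinal.{u}) (hα : α < (Order.succ (2 ^ #ι : Cardinal.{u})).ord) :
    ∃ S : CSystem (fun _ : ι => C), α < sysRank S := by
  have hα : α.card ≤ 2 ^ #ι := Order.lt_succ_iff.1 (Cardinal.lt_ord.1 hα)
  have hκ : ℵ₀ ≤ 2 ^ #ι := (Cardinal.aleph0_le_mk ι).trans (Cardinal.cantor _).le
  obtain ⟨φ, hφ⟩ := exists_surjective_nat_prod ι
  obtain ⟨U, hU⟩ := exists_isIsolating (List (Set.Iio α ×ₗ ℕ)) ι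
    ((Cardinal.lift_id'.{u, u + 1} _).trans_le (mk_list_Iio_lex_nat_le hκ hα))
  obtain ⟨c, hc⟩ := exists_ne (0 : C)
  refine ⟨treeSystem C φ U, lt_sysRank (stage_mem_idx 0)
    (sums_single_mem_grp List.isChain_nil c)
    (rankGE_sums_single hφ U c le_rfl List.isChain_nil (by simp))
    (hU.not_forall_rankGE_sums hφ [] _ ?_)⟩
  simpa [Finsupp.mapDomain_single] using hc

/-- For any nonzero cyclic group `C`, any infinite index set, and any ordinal
`α* < (2^ℵ₀)⁺`, there is a `C̄`-system (with all `Cᵢ = C`) of rank `> α*`. -/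
theorem exists_cyclic_system_of_large_rank {ι : Type u} [Infinite ι]
    (C : Type u) [AddCommGroup C] [IsAddCyclic C] [Nontrivial C]
    (α : Ordinal.{u}) (hα : α < (Order.succ (2 ^ Cardinal.aleph0 : Cardinal.{u})).ord) :
    ∃ S : CSystem (fun _ : ι => C), α < sysRank S :=
  exists_cyclic_system_of_large_rank_general C α (hα.trans_le (Cardinal.ord_le_ord.2
    (Order.succ_le_succ (Cardinal.power_le_power_left two_ne_zero (Cardinal.aleph0_le_mk ι)))))
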